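/- Let g be a finite-dimensional simple Lie algebra over the complex numbers ℂ and let κ, λ : g → g be linear maps satisfying condition (kl). Then there exist a scalar c ∈ ℂ and an element q ∈ g such that κ = c·id and λ(x) = c·x + ⁅q, x⁆ for all x ∈ g. Consequently, every Lie affgebra with tangent Lie algebra g is isomorphic to one with affine Lie bracket {a,b} = ⁅a,b⁆ + c·b + s for some c ∈ ℂ and s ∈ g. -/

import Mathlib

/-- Symmetry of `k` with respect to the bracket. -/
theorem kl_symm {g : Type*} [LieRing g] [LieAlgebra ℂ g] (k l : g →ₗ[ℂ] g)
    (hkl : ∀ a b : g, l ⁅a, b⁆ = ⁅l a, b⁆ - ⁅a, k b⁆ + ⁅a, l b⁆) (a b : g) :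
    ⁅k a, b⁆ = ⁅a, k b⁆ := by
  have h1 := hkl a b
  have h2 := hkl b a
  rw [← lie_skew b a, map_neg, h1, ← lie_skew (l b) a, ← lie_skew b (l a),
    ← lie_skew b (k a)] at h2
  linear_combination (norm := module) -h2

/-- The cocycle identity. -/
theorem kl_cocycle {g : Type*} [LieRing g] [LieAlgebra ℂ g] (k l : g →ₗ[ℂ] g)
    (hkl : ∀ a b : g, l ⁅a, b⁆ = ⁅l a, b⁆ - ⁅a, k b⁆ + ⁅a, l b⁆) (a b c : g) :
    ⁅a, ⁅b, k c⁆⁆ + ⁅b, ⁅c, k a⁆⁆ + ⁅c, ⁅a, k b⁆⁆ = 0 := by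
  have hs := kl_symm k l hkl
  have J := congrArg l (lie_jacobi a b c)
  simp only [map_add, map_zero, hkl, lie_add, lie_sub, ← hs] at J
  have A1 := lie_jacobi (l a) b c
  have A2 := lie_jacobi a (l b) c
  have A3 := lie_jacobi a b (l c)
  have B1 := lie_jacobi (k a) b c
  have B2 := lie_jacobi a (k b) c
  have B3 := lie_jacobi a b (k c)
  simp only [← hs] at B1 B2 B3 ⊢
  linear_combination (norm := module) J + B1 + B2 + B3 - A1 - A2 - A3

/-- `k` lies in the centroid. -/
theorem kl_centroid {g : Type*} [LieRing g] [LieAlgebra ℂ g] (k l : g →ₗ[ℂ] g)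
    (hz : ∀ x : g, (∀ c : g, ⁅c, x⁆ = 0) → x = 0)
    (hkl : ∀ a b : g, l ⁅a, b⁆ = ⁅l a, b⁆ - ⁅a, k b⁆ + ⁅a, l b⁆) (a b : g) :
    k ⁅a, b⁆ = ⁅a, k b⁆ := by
  have hs := kl_symm k l hkl
  rw [← sub_eq_zero]
  refine hz _ fun c => ?_
  have X := kl_cocycle k l hkl a b c
  have J := lie_jacobi a b (k c)
  rw [lie_sub, ← hs c ⁅a, b⁆]
  rw [← hs c a] at X
  linear_combination (norm := module) J - X

/-- Proposition 4.2(2)(i): if `g` is a finite-dimensional simple complex Lie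
algebra and `k`, `l` satisfy condition (kl), then `k = c • id` for a scalar
`c` and `l = c • id + ad_q` for some `q ∈ g`; consequently every Lie affgebra
with fibre `g` is isomorphic (via an affine bijection) to one with bracket
`{a,b} = ⁅a,b⁆ + c • b + s'`. -/
theorem simple_complex_fibre_classification
    {g : Type*} [LieRing g] [LieAlgebra ℂ g] [Module.Finite ℂ g]
    [LieAlgebra.IsSimple ℂ g]
    (k l : g →ₗ[ℂ] g)
    (hkl : ∀ a b : g, l ⁅a, b⁆ = ⁅l a, b⁆ - ⁅a, k b⁆ + ⁅a, l b⁆)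
    (s : g) (br : g → g → g)
    (hbr : ∀ a b : g, br a b = ⁅a, b⁆ + k a + l (b - a) + s) :
    (∃ (c : ℂ) (q : g),
        (∀ x : g, k x = c • x) ∧ (∀ x : g, l x = c • x + ⁅q, x⁆)) ∧
    (∃ (c : ℂ) (s' : g) (ψ : g →ₗ[ℂ] g) (r : g),
        Function.Bijective (fun a : g => ψ a + r) ∧
        ∀ a b : g,
          ψ (br a b) + r = ⁅ψ a + r, ψ b + r⁆ + c • (ψ b + r) + s') := by
  have hz : ∀ x : g, (∀ c : g, ⁅c, x⁆ = 0) → x = 0 := by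
    intro x hx
    have h : x ∈ LieAlgebra.center ℂ g := (LieModule.mem_maxTrivSubmodule ℂ g g x).mpr hx
    rwa [LieAlgebra.center_eq_bot, LieSubmodule.mem_bot] at h
  have hc := kl_centroid k l hz hkl
  have hnt : Nontrivial g := by
    by_contra h
    rw [not_nontrivial_iff_subsingleton] at h
    exact LieAlgebra.IsSimple.non_abelian ℂ (L := g) ⟨fun _ _ => Subsingleton.elim _ _⟩
  obtain ⟨c, hev⟩ := Module.End.exists_eigenvalue k
  have hk : ∀ x : g, k x = c • x := by
    let I : LieIdeal ℂ g :=
      { Module.End.eigenspace k c with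
        lie_mem := by
          intro x m hm
          have hm' : k m = c • m := Module.End.mem_eigenspace_iff.mp hm
          refine Module.End.mem_eigenspace_iff.mpr ?_
          rw [hc, hm', lie_smul] }
    rcases LieAlgebra.IsSimple.eq_bot_or_eq_top (R := ℂ) I with h | h
    · obtain ⟨v, hv, hv0⟩ := hev.exists_hasEigenvector
      have : v ∈ I := hv
      rw [h, LieSubmodule.mem_bot] at this
      exact absurd this hv0
    · intro x
      have : x ∈ I := by rw [h]; exact LieSubmodule.mem_top x
      exact Module.End.mem_eigenspace_iff.mp this
  let D : LieDerivation ℂ g g :=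
    { toLinearMap := l - c • LinearMap.id
      leibniz' := by
        intro a b
        simp only [LinearMap.sub_apply, LinearMap.smul_apply, LinearMap.id_apply, hkl, hk,
          lie_sub, lie_smul]
        rw [← lie_skew (l a) b, ← lie_skew a b]
        module }
  obtain ⟨q, hq⟩ := LieDerivation.IsKilling.exists_eq_ad D
  have hl : ∀ x : g, l x = c • x + ⁅q, x⁆ := by
    intro x
    have h := congrArg (fun E : LieDerivation ℂ g g => E x) hq
    have h2 : ⁅q, x⁆ = l x - c • x := by
      have h3 : ⁅q, x⁆ = D x := by simpa using h
      exact h3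
    rw [h2]; abel
  refine ⟨⟨c, q, hk, hl⟩, c, s + q - c • q, LinearMap.id, q, ?_, ?_⟩
  · simpa using (Equiv.addRight q).bijective
  · intro a b
    simp only [LinearMap.id_apply, hbr, hk, hl, lie_add, add_lie, lie_sub, lie_self]
    rw [← lie_skew a q]
    module
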